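/- There exists a universal constant C > 0 with the following property. For all d with 0 < d < 1/(2√3), all r with 0 < r < d/2, and all real s ≥ 1, if u : ℝ³ → ℝ is continuously differentiable and u vanishes on the perforated set K_r = ⋃_{x ∈ (dℤ)³} cl(B_r(x)), then ∫_{B_{s+1}(0) \ B_s(0)} |u(y)|² dy ≤ C (d³/r) ∫_{B_{s+1}(0) \ B_s(0)} |∇u(y)|² dy. -/

import Mathlib

open MeasureTheory
open scoped ENNReal

/-- The perforated set `K_r = ⋃_{x ∈ (dℤ)³} cl(B_r(x))`: the union of the closed balls of
radius `r` centered at the points of the lattice `(dℤ)³ ⊂ ℝ³`. -/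
def latticePerforation (d r : ℝ) : Set (EuclideanSpace ℝ (Fin 3)) :=
  ⋃ x ∈ {x : EuclideanSpace ℝ (Fin 3) | ∀ i, ∃ m : ℤ, x i = m * d},
    Metric.closedBall x r

/-!
Let `S` be star-shaped about `z`, contained in a ball of radius `R` about `z`, and let `u` vanish on
the ball of radius `r` about `z`. Along a ray issuing from `z`, the Cauchy–Schwarz inequality with
weight `x ^ (n - 1)`, where `n` is the dimension, bounds `|u|²` by `∫_r^∞ x ^ (1 - n) dx`, which is
a multiple of `r ^ (2 - n)`, times the weighted integral of `|∇u|²` along the ray. Polar coordinates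
about `z` then give the Poincaré inequality on `S` with a constant proportional to
`R ^ n / r ^ (n - 2)`.

The annulus is covered by such sets with `R` proportional to `d`: around each lattice point `z` take
the points near `z` that are visible from `z` inside the annulus. They cover because the width of
the annulus allows any of its points `y` to be moved radially, by half the diameter of a lattice
cell, to a point `p` such that everything within that distance of `p` is visible from `y`; and some
lattice point lies within that distance of `p`. Each point lies in boundedly many of these sets.
-/

open Set Metric Module

section PolarCoordinates

variable {E : Type*} [NormedAddCommGroup E] [NormedSpace ℝ E] [FiniteDimensional ℝ E]
  [MeasurableSpace E] [BorelSpace E]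

lemma lintegral_eq_lintegral_toSphere_lintegral_Ioi [Nontrivial E] (μ : Measure E)
    [μ.IsAddHaarMeasure] (z : E) {f : E → ℝ≥0∞} (hf : Measurable f) :
    ∫⁻ x, f x ∂μ = ∫⁻ w : sphere (0 : E) 1, ∫⁻ t in Ioi (0 : ℝ),
      ENNReal.ofReal (t ^ (finrank ℝ E - 1)) * f (z + t • (w : E)) ∂volume ∂μ.toSphere := by
  have polar_decomposition (x : ({(0 : E)}ᶜ : Set E)) :
      ((homeomorphUnitSphereProd E x).2 : ℝ) • ((homeomorphUnitSphereProd E x).1 : E) = x := by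
    have hx : ‖(x : E)‖ ≠ 0 := norm_ne_zero_iff.2 x.2
    simp [smul_smul, hx]
  calc ∫⁻ x, f x ∂μ
      = ∫⁻ x, f (z + x) ∂μ := (lintegral_add_left_eq_self f z).symm
    _ = ∫⁻ x : ({(0 : E)}ᶜ : Set E), f (z + x) ∂(μ.comap (↑)) := by
        rw [lintegral_subtype_comap (measurableSet_singleton _).compl fun x => f (z + x),
          restrict_compl_singleton]
    _ = ∫⁻ p, f (z + (p.2 : ℝ) • (p.1 : E))
          ∂μ.toSphere.prod (Measure.volumeIoiPow (finrank ℝ E - 1)) := by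
        rw [← μ.measurePreserving_homeomorphUnitSphereProd.lintegral_comp_emb
          (Homeomorph.measurableEmbedding _)]
        simp only [polar_decomposition]
    _ = ∫⁻ w, ∫⁻ t, f (z + (t : ℝ) • (w : E))
          ∂Measure.volumeIoiPow (finrank ℝ E - 1) ∂μ.toSphere :=
        lintegral_prod _ (by fun_prop)
    _ = _ := by
        refine lintegral_congr fun w => ?_
        rw [Measure.volumeIoiPow,
          lintegral_withDensity_eq_lintegral_mul _ (by fun_prop) (by fun_prop)]
        exact lintegral_subtype_comap measurableSet_Ioi
          fun t => ENNReal.ofReal (t ^ (finrank ℝ E - 1)) * f (z + t • (w : E))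

end PolarCoordinates

section OneDimensional

lemma lintegral_Ioc_ofReal_pow (n : ℕ) {R : ℝ} (hR : 0 ≤ R) :
    ∫⁻ t in Ioc 0 R, ENNReal.ofReal (t ^ n) = ENNReal.ofReal (R ^ (n + 1) / (n + 1)) := by
  rw [← ofReal_integral_eq_lintegral_ofReal, ← intervalIntegral.integral_of_le hR, integral_pow]
  · simp
  · exact (intervalIntegral.intervalIntegrable_pow n).1
  · filter_upwards [ae_restrict_mem measurableSet_Ioc] with t ht
    exact pow_nonneg ht.1.le n

lemma lintegral_Ioi_inv_ofReal_pow {n : ℕ} (hn : n ≠ 0) {r : ℝ} (hr : 0 < r) :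
    ∫⁻ x in Ioi r, (ENNReal.ofReal (x ^ (n + 1)))⁻¹ = ENNReal.ofReal (1 / (n * r ^ n)) := by
  have hexp : -((n + 1 : ℕ) : ℝ) < -1 := by
    have : (0 : ℝ) < n := by positivity
    push_cast
    linarith
  have hrpow : ∀ x ∈ Ioi r,
      (ENNReal.ofReal (x ^ (n + 1)))⁻¹ = ENNReal.ofReal (x ^ (-((n + 1 : ℕ) : ℝ))) := by
    intro x hx
    have hx0 : 0 < x := hr.trans hx
    rw [Real.rpow_neg hx0.le, Real.rpow_natCast, ENNReal.ofReal_inv_of_pos (by positivity)]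
  rw [setLIntegral_congr_fun measurableSet_Ioi hrpow, ← ofReal_integral_eq_lintegral_ofReal
    (integrableOn_Ioi_rpow_of_lt hexp hr), integral_Ioi_rpow_of_lt hexp hr]
  · have hexp_add : -((n + 1 : ℕ) : ℝ) + 1 = -n := by push_cast; ring
    rw [hexp_add, Real.rpow_neg hr.le, Real.rpow_natCast]
    congr 1
    field_simp
  · filter_upwards [ae_restrict_mem measurableSet_Ioi] with x hx
    exact Real.rpow_nonneg (hr.trans hx).le _

lemma sq_lintegral_le_lintegral_inv_mul_lintegral_mul_sq {α : Type*} [MeasurableSpace α]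
    {μ : Measure α} {ω f : α → ℝ≥0∞} (hω : AEMeasurable ω μ) (hf : AEMeasurable f μ)
    (hω_zero : ∀ᵐ x ∂μ, ω x ≠ 0) (hω_top : ∀ᵐ x ∂μ, ω x ≠ ∞) :
    (∫⁻ x, f x ∂μ) ^ 2 ≤ (∫⁻ x, (ω x)⁻¹ ∂μ) * ∫⁻ x, ω x * f x ^ 2 ∂μ := by
  have sq_rpow_half (c : ℝ≥0∞) : (c ^ 2) ^ (1 / 2 : ℝ) = c := by
    rw [← ENNReal.rpow_natCast, ← ENNReal.rpow_mul]
    norm_num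
  have rpow_half_sq (c : ℝ≥0∞) : (c ^ (1 / 2 : ℝ)) ^ 2 = c := by
    rw [← ENNReal.rpow_natCast, ← ENNReal.rpow_mul]
    norm_num
  have hsplit : ∫⁻ x, f x ∂μ
      = ∫⁻ x, (ω x)⁻¹ ^ (1 / 2 : ℝ) * (ω x * f x ^ 2) ^ (1 / 2 : ℝ) ∂μ := by
    refine lintegral_congr_ae ?_
    filter_upwards [hω_zero, hω_top] with x h0 htop
    rw [← ENNReal.mul_rpow_of_nonneg _ _ (by norm_num), ← mul_assoc,
      ENNReal.inv_mul_cancel h0 htop, one_mul, sq_rpow_half]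
  calc (∫⁻ x, f x ∂μ) ^ 2
      ≤ ((∫⁻ x, (ω x)⁻¹ ∂μ) ^ (1 / 2 : ℝ) * (∫⁻ x, ω x * f x ^ 2 ∂μ) ^ (1 / 2 : ℝ)) ^ 2 := by
        rw [hsplit]
        gcongr
        exact ENNReal.lintegral_mul_norm_pow_le hω.inv (hω.mul (hf.pow_const 2))
          (by norm_num) (by norm_num) (by norm_num)
    _ = _ := by rw [mul_pow, rpow_half_sq, rpow_half_sq]

lemma enorm_sq_le_mul_lintegral_pow_mul_enorm_deriv_sq {F : Type*} [NormedAddCommGroup F]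
    [NormedSpace ℝ F] {v : ℝ → F} (hv : ContDiff ℝ 1 v) {n : ℕ} (hn : n ≠ 0) {r t : ℝ}
    (hr : 0 < r) (hrt : r ≤ t) (hvr : v r = 0) :
    ‖v t‖ₑ ^ 2 ≤ ENNReal.ofReal (1 / (n * r ^ n)) *
      ∫⁻ x in Icc r t, ENNReal.ofReal (x ^ (n + 1)) * ‖deriv v x‖ₑ ^ 2 := by
  have hderiv : Continuous (deriv v) := hv.continuous_deriv le_rfl
  have hpos : ∀ᵐ x ∂volume.restrict (Icc r t), ENNReal.ofReal (x ^ (n + 1)) ≠ 0 := by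
    filter_upwards [ae_restrict_mem measurableSet_Icc] with x hx
    have hx0 : 0 < x := hr.trans_le hx.1
    exact (ENNReal.ofReal_pos.2 (by positivity)).ne'
  calc ‖v t‖ₑ ^ 2
      ≤ (∫⁻ x in Icc r t, ‖deriv v x‖ₑ) ^ 2 := by
        gcongr
        simpa [hvr] using enorm_sub_le_lintegral_deriv_of_contDiffOn_Icc hv.contDiffOn hrt
    _ ≤ (∫⁻ x in Icc r t, (ENNReal.ofReal (x ^ (n + 1)))⁻¹) *
          ∫⁻ x in Icc r t, ENNReal.ofReal (x ^ (n + 1)) * ‖deriv v x‖ₑ ^ 2 :=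
        sq_lintegral_le_lintegral_inv_mul_lintegral_mul_sq (by fun_prop)
          hderiv.enorm.aemeasurable hpos (.of_forall fun _ => ENNReal.ofReal_ne_top)
    _ ≤ _ := by
        gcongr
        rw [← lintegral_Ioi_inv_ofReal_pow hn hr, restrict_Ioi_eq_restrict_Ici]
        exact lintegral_mono_set Icc_subset_Ici_self

end OneDimensional

section StarConvex

variable {E F : Type*} [NormedAddCommGroup E] [NormedSpace ℝ E] [NormedAddCommGroup F]
  [NormedSpace ℝ F] {u : E → F} {S : Set E} {z w : E} {n : ℕ} {r : ℝ}

lemma enorm_deriv_comp_add_smul_le (hu : Differentiable ℝ u) (hw : ‖w‖ = 1) (x : ℝ) :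
    ‖deriv (fun t : ℝ => u (z + t • w)) x‖ₑ ≤ ‖fderiv ℝ u (z + x • w)‖ₑ := by
  have hray : HasDerivAt (fun t : ℝ => z + t • w) w x := by
    simpa using ((hasDerivAt_id x).smul_const w).const_add z
  have hcomp := (hu (z + x • w)).hasFDerivAt.comp_hasDerivAt x hray
  have hw' : ‖w‖ₑ = 1 := by rw [← ofReal_norm, hw, ENNReal.ofReal_one]
  calc ‖deriv (fun t : ℝ => u (z + t • w)) x‖ₑ
      = ‖fderiv ℝ u (z + x • w) w‖ₑ := congrArg _ hcomp.deriv
    _ ≤ ‖fderiv ℝ u (z + x • w)‖ₑ := by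
        simpa [hw'] using (fderiv ℝ u (z + x • w)).le_opENorm w

lemma enorm_sq_le_mul_lintegral_ray_of_starConvex (hu : ContDiff ℝ 1 u) (hn : n ≠ 0) (hr : 0 < r)
    (hu0 : EqOn u 0 (closedBall z r)) (hS : StarConvex ℝ z S) (hw : ‖w‖ = 1) {t : ℝ} (ht : 0 < t)
    (htS : z + t • w ∈ S) :
    ‖u (z + t • w)‖ₑ ^ 2 ≤ ENNReal.ofReal (1 / (n * r ^ n)) * ∫⁻ x in Ioi (0 : ℝ),
      ENNReal.ofReal (x ^ (n + 1)) * S.indicator (fun y => ‖fderiv ℝ u y‖ₑ ^ 2) (z + x • w) := by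
  have vanishes_near : ∀ x, 0 < x → x ≤ r → u (z + x • w) = 0 := fun x hx hxr =>
    hu0 (by simpa [norm_smul, hw, abs_of_pos hx] using hxr)
  rcases le_total t r with htr | hrt
  · simp [vanishes_near t ht htr]
  have hray : ContDiff ℝ 1 fun x : ℝ => u (z + x • w) := by fun_prop
  have hmem : ∀ x ∈ Icc r t, z + x • w ∈ S := by
    intro x hx
    have hx0 : 0 < x := hr.trans_le hx.1
    have := hS.add_smul_mem htS (t := x / t) (by positivity) ((div_le_one ht).2 hx.2)
    rwa [smul_smul, div_mul_cancel₀ _ ht.ne'] at this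
  calc ‖u (z + t • w)‖ₑ ^ 2
      ≤ ENNReal.ofReal (1 / (n * r ^ n)) * ∫⁻ x in Icc r t, ENNReal.ofReal (x ^ (n + 1)) *
          ‖deriv (fun x : ℝ => u (z + x • w)) x‖ₑ ^ 2 :=
        enorm_sq_le_mul_lintegral_pow_mul_enorm_deriv_sq hray hn hr hrt
          (vanishes_near r hr le_rfl)
    _ ≤ ENNReal.ofReal (1 / (n * r ^ n)) * ∫⁻ x in Icc r t, ENNReal.ofReal (x ^ (n + 1)) *
          S.indicator (fun y => ‖fderiv ℝ u y‖ₑ ^ 2) (z + x • w) := by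
        gcongr ENNReal.ofReal (1 / (n * r ^ n)) * ?_
        refine setLIntegral_mono' measurableSet_Icc fun x hx => ?_
        rw [indicator_of_mem (hmem x hx)]
        gcongr
        exact enorm_deriv_comp_add_smul_le (hu.differentiable one_ne_zero) hw x
    _ ≤ _ := by
        gcongr ENNReal.ofReal (1 / (n * r ^ n)) * ?_
        exact lintegral_mono_set fun x (hx : x ∈ Icc r t) => hr.trans_le hx.1

lemma lintegral_ray_indicator_enorm_sq_le (hu : ContDiff ℝ 1 u) (hn : n ≠ 0) (hr : 0 < r)
    (hu0 : EqOn u 0 (closedBall z r)) (hS : StarConvex ℝ z S) {R : ℝ} (hR : 0 ≤ R)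
    (hSR : S ⊆ closedBall z R) (hw : ‖w‖ = 1) :
    ∫⁻ t in Ioi (0 : ℝ), ENNReal.ofReal (t ^ (n + 1)) *
        S.indicator (fun y => ‖u y‖ₑ ^ 2) (z + t • w) ≤
      ENNReal.ofReal (R ^ (n + 2) / ((n + 2) * n * r ^ n)) * ∫⁻ t in Ioi (0 : ℝ),
        ENNReal.ofReal (t ^ (n + 1)) *
          S.indicator (fun y => ‖fderiv ℝ u y‖ₑ ^ 2) (z + t • w) := by
  set K := ∫⁻ t in Ioi (0 : ℝ), ENNReal.ofReal (t ^ (n + 1)) *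
    S.indicator (fun y => ‖fderiv ℝ u y‖ₑ ^ 2) (z + t • w)
  have pointwise : ∀ t ∈ Ioi (0 : ℝ),
      ENNReal.ofReal (t ^ (n + 1)) * S.indicator (fun y => ‖u y‖ₑ ^ 2) (z + t • w) ≤
        (Ioc 0 R).indicator
          (fun t => ENNReal.ofReal (t ^ (n + 1)) * (ENNReal.ofReal (1 / (n * r ^ n)) * K)) t := by
    intro t ht
    by_cases htS : z + t • w ∈ S
    · have htR : t ≤ R := by
        simpa [norm_smul, hw, abs_of_pos (mem_Ioi.1 ht)] using hSR htS
      rw [indicator_of_mem htS, indicator_of_mem (mem_Ioc.2 ⟨ht, htR⟩)]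
      gcongr
      exact enorm_sq_le_mul_lintegral_ray_of_starConvex hu hn hr hu0 hS hw ht htS
    · simp [indicator_of_notMem htS]
  calc _ ≤ ∫⁻ t in Ioi (0 : ℝ), (Ioc 0 R).indicator
          (fun t => ENNReal.ofReal (t ^ (n + 1)) * (ENNReal.ofReal (1 / (n * r ^ n)) * K)) t :=
        setLIntegral_mono' measurableSet_Ioi pointwise
    _ = ENNReal.ofReal (R ^ (n + 2) / (n + 2)) * (ENNReal.ofReal (1 / (n * r ^ n)) * K) := by
        rw [setLIntegral_indicator measurableSet_Ioc, inter_eq_left.2 Ioc_subset_Ioi_self,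
          lintegral_mul_const _ (by fun_prop), lintegral_Ioc_ofReal_pow (n + 1) hR]
        norm_num [add_assoc]
    _ = _ := by
        rw [← mul_assoc, ← ENNReal.ofReal_mul (by positivity), div_mul_div_comm, mul_one, mul_assoc]

theorem setLIntegral_enorm_sq_le_of_starConvex [FiniteDimensional ℝ E] [MeasurableSpace E]
    [BorelSpace E] (μ : Measure E) [μ.IsAddHaarMeasure] (hE : finrank ℝ E = n + 2)
    (hu : ContDiff ℝ 1 u) (hn : n ≠ 0) (hr : 0 < r) (hu0 : EqOn u 0 (closedBall z r))
    (hS : StarConvex ℝ z S) (hSm : MeasurableSet S) {R : ℝ} (hR : 0 ≤ R)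
    (hSR : S ⊆ closedBall z R) :
    ∫⁻ y in S, ‖u y‖ₑ ^ 2 ∂μ ≤ ENNReal.ofReal (R ^ (n + 2) / ((n + 2) * n * r ^ n)) *
      ∫⁻ y in S, ‖fderiv ℝ u y‖ₑ ^ 2 ∂μ := by
  have : Nontrivial E := nontrivial_of_finrank_pos (R := ℝ) (by omega)
  have hum : Measurable fun y => ‖u y‖ₑ ^ 2 := hu.continuous.enorm.measurable.pow_const 2
  have hdum : Measurable fun y => ‖fderiv ℝ u y‖ₑ ^ 2 :=
    (hu.continuous_fderiv one_ne_zero).enorm.measurable.pow_const 2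
  have hdim : finrank ℝ E - 1 = n + 1 := by omega
  rw [← lintegral_indicator hSm, ← lintegral_indicator hSm,
    lintegral_eq_lintegral_toSphere_lintegral_Ioi μ z (hum.indicator hSm),
    lintegral_eq_lintegral_toSphere_lintegral_Ioi μ z (hdum.indicator hSm),
    ← lintegral_const_mul' _ _ ENNReal.ofReal_ne_top, hdim]
  exact lintegral_mono fun w =>
    lintegral_ray_indicator_enorm_sq_le hu hn hr hu0 hS hR hSR (by simp)

end StarConvex

section Covering

variable {α κ : Type*} [MeasurableSpace α] [Countable κ] {μ : Measure α} {A : Set α}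
  {S : κ → Set α} {N : ℕ}

lemma tsum_setLIntegral_le_of_encard_le {g : α → ℝ≥0∞} (hg : Measurable g)
    (hSm : ∀ k, MeasurableSet (S k)) (hSA : ∀ k, S k ⊆ A)
    (hN : ∀ y, {k | y ∈ S k}.encard ≤ N) :
    ∑' k, ∫⁻ y in S k, g y ∂μ ≤ N * ∫⁻ y in A, g y ∂μ := by
  have overlap (y : α) : ∑' k, (S k).indicator g y ≤ N * g y := by
    calc ∑' k, (S k).indicator g y
        = ∑' k, {k | y ∈ S k}.indicator (fun _ => g y) k := rfl
      _ = {k | y ∈ S k}.encard * g y := by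
          rw [← tsum_subtype, ENNReal.tsum_set_const]
      _ ≤ N * g y := by
          gcongr
          exact_mod_cast ENat.toENNReal_le.2 (hN y)
  calc ∑' k, ∫⁻ y in S k, g y ∂μ
      = ∑' k, ∫⁻ y in A, (S k).indicator g y ∂μ := by
        refine tsum_congr fun k => ?_
        rw [setLIntegral_indicator (hSm k), inter_eq_left.2 (hSA k)]
    _ = ∫⁻ y in A, ∑' k, (S k).indicator g y ∂μ :=
        (lintegral_tsum fun k => (hg.indicator (hSm k)).aemeasurable).symm
    _ ≤ ∫⁻ y in A, N * g y ∂μ := lintegral_mono overlap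
    _ = N * ∫⁻ y in A, g y ∂μ := lintegral_const_mul _ hg

lemma setLIntegral_le_of_cover {f g : α → ℝ≥0∞} {c : ℝ≥0∞} (hg : Measurable g)
    (hSm : ∀ k, MeasurableSet (S k)) (hSA : ∀ k, S k ⊆ A) (hAS : A ⊆ ⋃ k, S k)
    (hN : ∀ y, {k | y ∈ S k}.encard ≤ N)
    (hfg : ∀ k, ∫⁻ y in S k, f y ∂μ ≤ c * ∫⁻ y in S k, g y ∂μ) :
    ∫⁻ y in A, f y ∂μ ≤ c * N * ∫⁻ y in A, g y ∂μ := by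
  calc ∫⁻ y in A, f y ∂μ
      ≤ ∫⁻ y in ⋃ k, S k, f y ∂μ := lintegral_mono_set hAS
    _ ≤ ∑' k, ∫⁻ y in S k, f y ∂μ := lintegral_iUnion_le _ _
    _ ≤ ∑' k, c * ∫⁻ y in S k, g y ∂μ := ENNReal.tsum_le_tsum hfg
    _ = c * ∑' k, ∫⁻ y in S k, g y ∂μ := ENNReal.tsum_mul_left
    _ ≤ c * (N * ∫⁻ y in A, g y ∂μ) := by
        gcongr
        exact tsum_setLIntegral_le_of_encard_le hg hSm hSA hN
    _ = c * N * ∫⁻ y in A, g y ∂μ := (mul_assoc _ _ _).symm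

end Covering

section Visibility

variable {E : Type*} [AddCommGroup E] [Module ℝ E]

/-- The points `y` of `A` visible from `z` inside `A`: those for which the whole segment from `z` to
`y` lies in `A`. It is the largest subset of `A` that is star-shaped about `z`; in particular it is
empty if `z ∉ A`. -/
def visibleFrom (z : E) (A : Set E) : Set E :=
  {y | segment ℝ z y ⊆ A}

lemma visibleFrom_subset (z : E) (A : Set E) : visibleFrom z A ⊆ A :=
  fun y hy => hy (right_mem_segment ℝ z y)

lemma starConvex_visibleFrom (z : E) (A : Set E) : StarConvex ℝ z (visibleFrom z A) := by
  refine starConvex_iff_segment_subset.2 fun y hy x hx => ?_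
  have : segment ℝ z x ⊆ segment ℝ z y :=
    (convex_segment z y).segment_subset (left_mem_segment ℝ z y) hx
  exact this.trans hy

lemma visibleFrom_eq_setOf_forall_mem_Icc (z : E) (A : Set E) :
    visibleFrom z A = {y | ∀ t ∈ Icc (0 : ℝ) 1, (1 - t) • z + t • y ∈ A} := by
  ext y
  simp only [visibleFrom, segment_eq_image, image_subset_iff]
  rfl

variable [TopologicalSpace E] [ContinuousAdd E] [ContinuousSMul ℝ E]

lemma isOpen_visibleFrom (z : E) {U : Set E} (hU : IsOpen U) : IsOpen (visibleFrom z U) := by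
  rw [visibleFrom_eq_setOf_forall_mem_Icc, isOpen_iff_eventually]
  intro y hy
  refine isCompact_Icc.eventually_forall_of_forall_eventually fun t ht => ?_
  have hcont : Continuous fun p : E × ℝ => (1 - p.2) • z + p.2 • p.1 := by fun_prop
  exact hcont.continuousAt.eventually_mem (hU.mem_nhds (hy t ht))

lemma isClosed_visibleFrom (z : E) {C : Set E} (hC : IsClosed C) : IsClosed (visibleFrom z C) := by
  simp only [visibleFrom_eq_setOf_forall_mem_Icc, ofPred_forall]
  exact isClosed_biInter fun t _ => hC.preimage (by fun_prop)

lemma measurableSet_visibleFrom_diff [MeasurableSpace E] [OpensMeasurableSpace E] (z : E)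
    {U V : Set E} (hU : IsOpen U) (hV : IsOpen V) : MeasurableSet (visibleFrom z (U \ V)) := by
  have : visibleFrom z (U \ V) = visibleFrom z U ∩ visibleFrom z Vᶜ := by
    ext y
    exact subset_inter_iff
  rw [this]
  exact (isOpen_visibleFrom z hU).measurableSet.inter
    (isClosed_visibleFrom z hV.isClosed_compl).measurableSet

end Visibility

section Annulus

variable {E : Type*} [NormedAddCommGroup E] [InnerProductSpace ℝ E] {a b η : ℝ} {e y z : E}

lemma segment_subset_annulus_of_le_inner (he : ‖e‖ = 1) (hy : a ≤ inner ℝ e y)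
    (hz : a ≤ inner ℝ e z) (hyb : ‖y‖ < b) (hzb : ‖z‖ < b) :
    segment ℝ z y ⊆ ball 0 b \ ball 0 a := by
  have hconvex : Convex ℝ (ball 0 b ∩ {x : E | a ≤ inner ℝ e x}) :=
    (convex_ball 0 b).inter (convex_halfSpace_ge (innerSL ℝ e).isLinear a)
  have hsubset : ball 0 b ∩ {x : E | a ≤ inner ℝ e x} ⊆ ball 0 b \ ball 0 a := by
    rintro x ⟨hxb, hxa : a ≤ inner ℝ e x⟩
    have : inner ℝ e x ≤ ‖x‖ := by simpa [he] using real_inner_le_norm e x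
    exact ⟨hxb, by simpa using hxa.trans this⟩
  exact (hconvex.segment_subset ⟨by simpa using hzb, hz⟩ ⟨by simpa using hyb, hy⟩).trans hsubset

lemma exists_norm_eq_one_and_norm_smul_eq [Nontrivial E] (y : E) :
    ∃ e : E, ‖e‖ = 1 ∧ ‖y‖ • e = y := by
  rcases eq_or_ne y 0 with rfl | hy
  · obtain ⟨e, he⟩ := exists_norm_eq E zero_le_one
    exact ⟨e, he, by simp⟩
  · exact ⟨‖y‖⁻¹ • y, norm_smul_inv_norm hy, smul_inv_smul₀ (norm_ne_zero_iff.2 hy) y⟩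

lemma segment_subset_annulus_of_norm_sub_smul_le (ha : 0 ≤ a) (he : ‖e‖ = 1) (hye : ‖y‖ • e = y)
    (hy : y ∈ ball 0 b \ ball 0 a) {τ : ℝ} (haτ : a + η ≤ τ) (hτb : τ + η < b)
    (hz : ‖z - τ • e‖ ≤ η) : segment ℝ z y ⊆ ball 0 b \ ball 0 a := by
  have hyb : ‖y‖ < b := by simpa using hy.1
  have hya : a ≤ ‖y‖ := by simpa using hy.2
  have hτ : 0 ≤ τ := by linarith [norm_nonneg (z - τ • e)]
  have inner_smul_self (c : ℝ) : inner ℝ e (c • e) = c := by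
    rw [real_inner_smul_right, real_inner_self_eq_norm_sq, he, one_pow, mul_one]
  have hyin : a ≤ inner ℝ e y := by rwa [← hye, inner_smul_self]
  have hzin : a ≤ inner ℝ e z := by
    have h1 : |inner ℝ e (z - τ • e)| ≤ η := by
      exact (abs_real_inner_le_norm e (z - τ • e)).trans (by rwa [he, one_mul])
    rw [inner_sub_right, inner_smul_self] at h1
    linarith [(abs_le.1 h1).1]
  have hzb : ‖z‖ < b := by
    have h1 : ‖τ • e‖ = τ := by rw [norm_smul, he, mul_one, Real.norm_of_nonneg hτ]
    linarith [norm_le_norm_add_norm_sub' z (τ • e)]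
  exact segment_subset_annulus_of_le_inner he hyin hzin hyb hzb

lemma exists_closedBall_visible_of_mem_annulus [Nontrivial E] (ha : 0 ≤ a) (hη : 0 ≤ η)
    (hab : a + 4 * η ≤ b) (hy : y ∈ ball 0 b \ ball 0 a) :
    ∃ p ∈ closedBall y η, ∀ z ∈ closedBall p η, y ∈ visibleFrom z (ball 0 b \ ball 0 a) := by
  have hyb : ‖y‖ < b := by simpa using hy.1
  have hya : a ≤ ‖y‖ := by simpa using hy.2
  obtain ⟨e, he, hye⟩ := exists_norm_eq_one_and_norm_smul_eq y
  obtain ⟨τ, hτy, haτ, hτb⟩ : ∃ τ, |τ - ‖y‖| ≤ η ∧ a + η ≤ τ ∧ τ + η < b := by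
    by_cases houter : ‖y‖ + 2 * η < b
    · exact ⟨‖y‖ + η, by simp [abs_of_nonneg hη], by linarith, by linarith⟩
    · exact ⟨‖y‖ - η, by simp [abs_of_nonneg hη], by linarith, by linarith⟩
  refine ⟨τ • e, mem_closedBall_iff_norm.2 ?_, fun z hz =>
    segment_subset_annulus_of_norm_sub_smul_le ha he hye hy haτ hτb (mem_closedBall_iff_norm.1 hz)⟩
  calc ‖τ • e - y‖ = ‖(τ - ‖y‖) • e‖ := by rw [sub_smul, hye]
    _ ≤ η := by rwa [norm_smul, he, mul_one]

end Annulus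

section Lattice

variable {ι : Type*}

/-- The point of the lattice `(dℤ)^ι` with integer coordinates `k`. Indexing the centres of the
perforation by the countable type `ι → ℤ` lets the visible regions be summed over the lattice. -/
noncomputable def latticePoint (d : ℝ) (k : ι → ℤ) : EuclideanSpace ℝ ι :=
  WithLp.toLp 2 fun i => k i * d

variable [Fintype ι] {d : ℝ}

lemma exists_dist_latticePoint_le (hd : 0 < d) (p : EuclideanSpace ℝ ι) :
    ∃ k, dist (latticePoint d k) p ≤ √(Fintype.card ι) / 2 * d := by
  set k : ι → ℤ := fun i => round (p i / d)
  have coord_le (i : ι) : ‖(latticePoint d k - p) i‖ ≤ d / 2 := by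
    have : (latticePoint d k - p) i = -((p i / d - round (p i / d)) * d) := by
      simp only [latticePoint, PiLp.sub_apply, k]
      field_simp
      ring
    rw [this, norm_neg, norm_mul, Real.norm_eq_abs, Real.norm_of_nonneg hd.le]
    nlinarith [abs_sub_round (p i / d)]
  refine ⟨k, ?_⟩
  calc dist (latticePoint d k) p
      = √(∑ i, ‖(latticePoint d k - p) i‖ ^ 2) := by
        rw [dist_eq_norm, EuclideanSpace.norm_eq]
    _ ≤ √(∑ _i : ι, (d / 2) ^ 2) := by
        gcongr with i
        exact coord_le i
    _ = √(Fintype.card ι) / 2 * d := by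
        rw [Finset.sum_const, nsmul_eq_mul, Real.sqrt_mul (Nat.cast_nonneg _),
          Real.sqrt_sq (by positivity), Finset.card_univ]
        ring

lemma encard_setOf_mem_closedBall_latticePoint_le (hd : 0 < d) (m : ℕ) (y : EuclideanSpace ℝ ι) :
    {k | y ∈ closedBall (latticePoint d k) (m * d)}.encard
      ≤ ((2 * m + 1) ^ Fintype.card ι : ℕ) := by
  classical
  set box : Finset (ι → ℤ) :=
    Fintype.piFinset fun i => Finset.Icc (⌈y i / d⌉ - m) (⌊y i / d⌋ + m)
  have subset_box : {k | y ∈ closedBall (latticePoint d k) (m * d)} ⊆ box := by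
    intro k hk
    refine Finset.mem_coe.2 (Fintype.mem_piFinset.2 fun i => ?_)
    have hcoord : |y i - k i * d| ≤ m * d :=
      (PiLp.norm_apply_le (y - latticePoint d k) i).trans (mem_closedBall_iff_norm.1 hk)
    rw [abs_le] at hcoord
    have hlower : ⌈y i / d⌉ ≤ k i + m := by
      rw [Int.ceil_le, div_le_iff₀ hd]
      push_cast
      linarith
    have hupper : k i - m ≤ ⌊y i / d⌋ := by
      rw [Int.le_floor, le_div_iff₀ hd]
      push_cast
      linarith
    rw [Finset.mem_Icc]
    omega
  have card_box : box.card ≤ (2 * m + 1) ^ Fintype.card ι := by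
    rw [Fintype.card_piFinset]
    refine Finset.prod_le_pow_card _ _ _ fun i _ => ?_
    have := Int.floor_le_ceil (y i / d)
    rw [Int.card_Icc]
    omega
  calc _ ≤ (box : Set (ι → ℤ)).encard := encard_le_encard subset_box
    _ = box.card := encard_coe_eq_coe_finsetCard box
    _ ≤ _ := by exact_mod_cast card_box

lemma latticePerforation_eq_iUnion_closedBall (d r : ℝ) :
    latticePerforation d r = ⋃ k : Fin 3 → ℤ, closedBall (latticePoint d k) r := by
  have : {x : EuclideanSpace ℝ (Fin 3) | ∀ i, ∃ m : ℤ, x i = m * d} = range (latticePoint d) := by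
    ext x
    refine ⟨fun hx => ?_, ?_⟩
    · choose k hk using hx
      exact ⟨k, by ext i; exact (hk i).symm⟩
    · rintro ⟨k, rfl⟩ i
      exact ⟨k i, rfl⟩
  rw [latticePerforation, this, biUnion_range]

end Lattice

section Perforated

variable {ι : Type*} [Fintype ι] {n : ℕ} {d a b : ℝ}

lemma annulus_subset_iUnion_visibleFrom_latticePoint (hι : Fintype.card ι = n + 2) (hd : 0 < d)
    (ha : 0 ≤ a) (hab : a + 2 * √(n + 2) * d ≤ b) :
    ball (0 : EuclideanSpace ℝ ι) b \ ball 0 a ⊆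
      ⋃ k : ι → ℤ, visibleFrom (latticePoint d k) (ball 0 b \ ball 0 a) ∩
        closedBall (latticePoint d k) ((n + 2 : ℕ) * d) := by
  have : Nonempty ι := Fintype.card_pos_iff.1 (by omega)
  set η := √(n + 2) / 2 * d with hη_def
  have hη : 0 ≤ η := by positivity
  have hwidth : a + 4 * η ≤ b := by linarith
  have two_mul_η_le : 2 * η ≤ (n + 2 : ℕ) * d := by
    have : √(n + 2 : ℝ) ≤ n + 2 := Real.sqrt_le_iff.2 ⟨by positivity, by nlinarith⟩
    rw [hη_def]
    push_cast
    nlinarith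
  intro y hy
  obtain ⟨p, hpy, hvisible⟩ := exists_closedBall_visible_of_mem_annulus ha hη hwidth hy
  obtain ⟨k, hk⟩ : ∃ k, dist (latticePoint d k) p ≤ η := by
    simpa [hι] using exists_dist_latticePoint_le hd p
  refine mem_iUnion.2 ⟨k, hvisible _ hk, mem_closedBall'.2 ?_⟩
  linarith [dist_triangle (latticePoint d k) p y, mem_closedBall.1 hpy]

/-- The constant of the Poincaré inequality for the perforated annulus in dimension `n + 2`: the
bound `(2 (n + 2) + 1) ^ (n + 2)` for the number of overlapping visible regions, times the constant
`(n + 2) ^ (n + 2) / ((n + 2) * n)` of the star-shaped inequality at radius `R = (n + 2) * d`,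
without its factor `d ^ (n + 2) / r ^ n`. -/
noncomputable def perforatedPoincareConst (n : ℕ) : ℝ :=
  (2 * (n + 2) + 1) ^ (n + 2) * (n + 2) ^ (n + 2) / ((n + 2) * n)

theorem poincare_annulus_perforated_domain_general {F : Type*} [NormedAddCommGroup F]
    [NormedSpace ℝ F] (hι : Fintype.card ι = n + 2) (hn : n ≠ 0) (hd : 0 < d) {r : ℝ} (hr : 0 < r)
    (ha : 0 ≤ a) (hab : a + 2 * √(n + 2) * d ≤ b) {u : EuclideanSpace ℝ ι → F}
    (hu : ContDiff ℝ 1 u) (hu0 : ∀ y ∈ ⋃ k, closedBall (latticePoint d k) r, u y = 0) :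
    ∫⁻ y in ball 0 b \ ball 0 a, ‖u y‖ₑ ^ 2 ≤
      ENNReal.ofReal (perforatedPoincareConst n * (d ^ (n + 2) / r ^ n)) *
        ∫⁻ y in ball 0 b \ ball 0 a, ‖fderiv ℝ u y‖ₑ ^ 2 := by
  set R : ℝ := (n + 2 : ℕ) * d with hR
  set S : (ι → ℤ) → Set (EuclideanSpace ℝ ι) := fun k =>
    visibleFrom (latticePoint d k) (ball 0 b \ ball 0 a) ∩ closedBall (latticePoint d k) R
  have hdum : Measurable fun y => ‖fderiv ℝ u y‖ₑ ^ 2 :=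
    (hu.continuous_fderiv one_ne_zero).enorm.measurable.pow_const 2
  have hSm (k : ι → ℤ) : MeasurableSet (S k) :=
    (measurableSet_visibleFrom_diff _ isOpen_ball isOpen_ball).inter measurableSet_closedBall
  have hSstar (k : ι → ℤ) : StarConvex ℝ (latticePoint d k) (S k) :=
    (starConvex_visibleFrom _ _).inter
      ((convex_closedBall _ R).starConvex (mem_closedBall_self (by positivity)))
  have poincare_cell (k : ι → ℤ) : ∫⁻ y in S k, ‖u y‖ₑ ^ 2 ≤
      ENNReal.ofReal (R ^ (n + 2) / ((n + 2) * n * r ^ n)) * ∫⁻ y in S k, ‖fderiv ℝ u y‖ₑ ^ 2 :=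
    setLIntegral_enorm_sq_le_of_starConvex volume (by rw [finrank_euclideanSpace, hι]) hu hn hr
      (fun y hy => hu0 y (mem_iUnion_of_mem k hy)) (hSstar k) (hSm k) (by positivity)
      inter_subset_right
  have overlap (y : EuclideanSpace ℝ ι) :
      {k | y ∈ S k}.encard ≤ ((2 * (n + 2) + 1) ^ Fintype.card ι : ℕ) :=
    (encard_le_encard fun _ hk => hk.2).trans
      (encard_setOf_mem_closedBall_latticePoint_le hd (n + 2) y)
  have hconst : perforatedPoincareConst n * (d ^ (n + 2) / r ^ n) =
      R ^ (n + 2) / ((n + 2) * n * r ^ n) * ((2 * (n + 2) + 1) ^ Fintype.card ι : ℕ) := by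
    rw [perforatedPoincareConst, hR, hι, mul_pow]
    push_cast
    field_simp
  rw [hconst, ENNReal.ofReal_mul (by positivity), ENNReal.ofReal_natCast]
  exact setLIntegral_le_of_cover hdum hSm
    (fun k => inter_subset_left.trans (visibleFrom_subset _ _))
    (annulus_subset_iUnion_visibleFrom_latticePoint hι hd ha hab) overlap poincare_cell

end Perforated

lemma enorm_gradient {E : Type*} [NormedAddCommGroup E] [InnerProductSpace ℝ E] [CompleteSpace E]
    (u : E → ℝ) (y : E) : ‖gradient u y‖ₑ = ‖fderiv ℝ u y‖ₑ := by
  simp [gradient, enorm_eq_nnnorm]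

/-- **Poincaré inequality on annuli for perforated domains.**
There is a universal constant `C > 0` such that for `0 < d < 1/(2√3)`, `0 < r < d/2` and
`s ≥ 1`, every `C¹` function `u : ℝ³ → ℝ` vanishing on the perforated set
`K_r = ⋃_{x ∈ (dℤ)³} cl(B_r(x))` satisfies
`∫_{B_{s+1}(0) \ B_s(0)} u² ≤ C (d³/r) ∫_{B_{s+1}(0) \ B_s(0)} |∇u|²`. -/
theorem poincare_annulus_perforated_domain :
    ∃ C : ℝ, 0 < C ∧
      ∀ d r : ℝ, 0 < d → d < 1 / (2 * Real.sqrt 3) → 0 < r → r < d / 2 →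
        ∀ s : ℝ, 1 ≤ s →
          ∀ u : EuclideanSpace ℝ (Fin 3) → ℝ,
            ContDiff ℝ 1 u →
            (∀ y ∈ latticePerforation d r, u y = 0) →
            ∫⁻ y in Metric.ball (0 : EuclideanSpace ℝ (Fin 3)) (s + 1) \ Metric.ball 0 s,
                (‖u y‖₊ : ℝ≥0∞) ^ 2
              ≤ ENNReal.ofReal (C * (d ^ 3 / r)) *
                  ∫⁻ y in Metric.ball (0 : EuclideanSpace ℝ (Fin 3)) (s + 1) \
                      Metric.ball 0 s,
                    (‖gradient u y‖₊ : ℝ≥0∞) ^ 2 := by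
  refine ⟨perforatedPoincareConst 1, by norm_num [perforatedPoincareConst], ?_⟩
  intro d r hd hd' hr _ s hs u hu hu0
  have hwidth : s + 2 * √((1 : ℕ) + 2) * d ≤ s + 1 := by
    rw [lt_div_iff₀ (by positivity)] at hd'
    norm_num
    linarith
  rw [latticePerforation_eq_iUnion_closedBall] at hu0
  simpa [← enorm_eq_nnnorm, enorm_gradient] using
    poincare_annulus_perforated_domain_general (n := 1) rfl one_ne_zero hd hr (by linarith) hwidth
      hu hu0
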